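/- The graph H on vertex set {1,2,3,4,5,6,7} with edge set {{1,2}, {1,3}, {2,3}, {1,4}, {3,4}, {1,5}, {2,5}, {4,5}, {2,6}, {3,6}, {4,6}, {5,6}, {4,7}, {5,7}, {6,7}} is not word-representable. -/

import Mathlib

/-- Two letters `x ≠ y` alternate in the word `w` if, after deleting all other letters,
consecutive letters are always distinct (i.e. the result is `xyxy...` or `yxyx...`). -/
def Alternate {V : Type*} [DecidableEq V] (w : List V) (x y : V) : Prop :=
  (w.filter (fun z => z = x ∨ z = y)).Chain' (· ≠ ·)

/-- A graph is word-representable if some word over its vertex alphabet, containing every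
vertex, is such that two distinct letters alternate iff they are adjacent. -/
def WordRepresentable {V : Type*} [DecidableEq V] (G : SimpleGraph V) : Prop :=
  ∃ w : List V, (∀ v : V, v ∈ w) ∧ ∀ x y : V, x ≠ y → (Alternate w x y ↔ G.Adj x y)

/-- The 7-vertex graph `H` with vertices `0,...,6` (representing `1,...,7`) and the fifteen
edges `{1,2}, {1,3}, {2,3}, {1,4}, {3,4}, {1,5}, {2,5}, {4,5}, {2,6}, {3,6}, {4,6},
{5,6}, {4,7}, {5,7}, {6,7}` (here written 0-indexed). -/
def graphH : SimpleGraph (Fin 7) :=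
  SimpleGraph.fromRel (fun a b => (a, b) ∈
    ([(0, 1), (0, 2), (1, 2), (0, 3), (2, 3), (0, 4), (1, 4), (3, 4),
      (1, 5), (2, 5), (3, 5), (4, 5), (3, 6), (4, 6), (5, 6)] : List (Fin 7 × Fin 7)))

/-!
In a word representing `G`, order the letters by `x ≤ y` when every prefix contains at least as many
`x` as `y`. Alternating letters are comparable, and along a chain `x ≤ a ≤ b ≤ y` the prefix counts
of `a` and `b` lie between those of `x` and `y`, so if `x` and `y` alternate then so do `a` and `b`.
Hence a word-representable graph carries a semi-transitive order.

Such an order has a rigidity property: if `x ≤ m ≤ y` and `z` is adjacent to `x` and `y` but not to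
`m`, then `x ≤ z ≤ y`. The graph `H` contains a 4-clique `t 0, t 1, t 2, d` and flaps `p i`, each
attached to the edge of the triangle `t` opposite `t i`. If `t i ≤ t j ≤ t k`, rigidity puts `p j`,
and then `d`, between `t i` and `t k`. If `d ≤ t j`, it puts `p k`, and then `t k`, between `t i`
and `t j`, which is absurd; the case `t j ≤ d` is dual.
-/

section Words

variable {V : Type*} [DecidableEq V] {w : List V} {x y z : V}

/-- The letter `x` leads the letter `y` in `w`: every prefix contains at least as many `x` as `y`,
that is, the `n`-th `y` is always preceded by the `n`-th `x`. On the letters of `w` this is the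
semi-transitive order of the graph that `w` represents. -/
def Leads (w : List V) (x y : V) : Prop :=
  ∀ u, u <+: w → u.count y ≤ u.count x

/-- The letters `x` and `y` alternate in `w` as `xyxy...`, starting with `x`. This is expressed by
counting letters in prefixes, so that it can be compared with `Leads`. -/
def AlternateFrom (w : List V) (x y : V) : Prop :=
  ∀ u, u <+: w → u.count y ≤ u.count x ∧ u.count x ≤ u.count y + 1

theorem AlternateFrom.leads (h : AlternateFrom w x y) : Leads w x y :=
  fun u hu => (h u hu).1

theorem Leads.refl (w : List V) (x : V) : Leads w x x :=
  fun _ _ => le_rfl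

theorem Leads.trans (hxy : Leads w x y) (hyz : Leads w y z) : Leads w x z :=
  fun u hu => (hyz u hu).trans (hxy u hu)

theorem Leads.antisymm (hx : x ∈ w) (hxy : Leads w x y) (hyx : Leads w y x) : x = y := by
  by_contra hne
  obtain ⟨s, t, rfl⟩ := List.append_of_mem hx
  have count_eq (u : List V) (hu : u <+: s ++ x :: t) : u.count x = u.count y :=
    (hyx u hu).antisymm (hxy u hu)
  have before : s.count x = s.count y := count_eq s (s.prefix_append _)
  have after : (s ++ [x]).count x = (s ++ [x]).count y := count_eq _ (by simp)
  simp [before, hne] at after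

theorem alternateFrom_cons_iff :
    AlternateFrom (z :: w) x y ↔ ∀ u, u <+: w →
      (z :: u).count y ≤ (z :: u).count x ∧ (z :: u).count x ≤ (z :: u).count y + 1 := by
  constructor
  · exact fun h u hu => h _ (List.cons_prefix_cons.2 ⟨rfl, hu⟩)
  · intro h u hu
    rcases List.prefix_cons_iff.1 hu with rfl | ⟨v, rfl, hv⟩
    · simp
    · exact h v hv

theorem alternateFrom_cons_left (hxy : x ≠ y) :
    AlternateFrom (x :: w) x y ↔ AlternateFrom w y x := by
  rw [alternateFrom_cons_iff]
  simp only [AlternateFrom, List.count_cons_self, List.count_cons_of_ne hxy,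
    Nat.add_le_add_iff_right, and_comm]

theorem not_alternateFrom_cons_right (hxy : x ≠ y) : ¬ AlternateFrom (y :: w) x y :=
  fun h => by simpa [hxy.symm] using (h [y] (by simp)).1

theorem alternateFrom_cons_of_ne (hx : z ≠ x) (hy : z ≠ y) :
    AlternateFrom (z :: w) x y ↔ AlternateFrom w x y := by
  rw [alternateFrom_cons_iff]
  simp only [AlternateFrom, List.count_cons_of_ne hx, List.count_cons_of_ne hy]

-- Prepending `y` to the filtered word forces its first letter, if any, to be `x`.
theorem isChain_cons_filter_iff_alternateFrom (hxy : x ≠ y) :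
    (y :: w.filter (fun v => v = x ∨ v = y)).IsChain (· ≠ ·) ↔ AlternateFrom w x y := by
  induction w generalizing x y with
  | nil => simp [AlternateFrom]
  | cons z w ih =>
    by_cases hx : z = x
    · subst hx
      simp [alternateFrom_cons_left hxy, ← ih hxy.symm, hxy.symm, or_comm]
    by_cases hy : z = y
    · subst hy
      simp [not_alternateFrom_cons_right hxy]
    · simp [alternateFrom_cons_of_ne hx hy, ← ih hxy, hx, hy]

theorem alternate_iff_alternateFrom (hxy : x ≠ y) :
    Alternate w x y ↔ AlternateFrom w x y ∨ AlternateFrom w y x := by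
  have filter_comm : w.filter (fun v => v = y ∨ v = x) = w.filter (fun v => v = x ∨ v = y) := by
    simp only [or_comm]
  rw [← isChain_cons_filter_iff_alternateFrom hxy,
    ← isChain_cons_filter_iff_alternateFrom hxy.symm, filter_comm]
  constructor
  · intro (h : List.IsChain _ _)
    simp only [List.isChain_cons, h, and_true]
    by_cases hy : y ∈ (w.filter (fun v => v = x ∨ v = y)).head?
    · exact .inr fun v hv => Option.mem_unique hv hy ▸ hxy
    · exact .inl fun v hv hyv => hy (hyv ▸ hv)
  · rintro (h | h) <;> exact h.tail

end Words

section SemiTransitive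

variable {V : Type*} {G : SimpleGraph V} {r : V → V → Prop}

/-- A semi-transitive orientation of `G`, encoded by its reachability order `r`: adjacent vertices
are comparable, and a chain from `x` to `y` whose ends are adjacent consists of pairwise adjacent
vertices, so that `x y` is not a shortcut. -/
structure IsSemiTransitiveOrder (G : SimpleGraph V) (r : V → V → Prop) : Prop
    extends IsPartialOrder V r where
  comparable {x y : V} : G.Adj x y → r x y ∨ r y x
  adj_of_chain {x a b y : V} : G.Adj x y → r x a → r a b → r b y → a ≠ b → G.Adj a b

theorem WordRepresentable.exists_isSemiTransitiveOrder [DecidableEq V]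
    (hG : WordRepresentable G) : ∃ r, IsSemiTransitiveOrder G r := by
  obtain ⟨w, hmem, hw⟩ := hG
  have alternateFrom {x y : V} (h : G.Adj x y) : AlternateFrom w x y ∨ AlternateFrom w y x :=
    (alternate_iff_alternateFrom h.ne).1 ((hw x y h.ne).2 h)
  refine ⟨Leads w, {
    refl := Leads.refl w
    trans := fun _ _ _ => Leads.trans
    antisymm := fun x _ => Leads.antisymm (hmem x)
    comparable := fun h => (alternateFrom h).imp AlternateFrom.leads AlternateFrom.leads
    adj_of_chain := ?_ }⟩
  intro x a b y hxy hxa hab hby hne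
  have count_le (u : List V) (hu : u <+: w) : u.count x ≤ u.count y + 1 := by
    rcases alternateFrom hxy with h | h
    · exact (h u hu).2
    · exact (h u hu).1.trans (Nat.le_succ _)
  refine (hw a b hne).1 ((alternate_iff_alternateFrom hne).2 (.inl fun u hu => ⟨hab u hu, ?_⟩))
  calc u.count a ≤ u.count x := hxa u hu
    _ ≤ u.count y + 1 := count_le u hu
    _ ≤ u.count b + 1 := Nat.succ_le_succ (hby u hu)

namespace IsSemiTransitiveOrder

theorem between_of_not_adj (hr : IsSemiTransitiveOrder G r) {x m y z : V} (hxm : r x m)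
    (hmy : r m y) (hzx : G.Adj z x) (hzy : G.Adj z y) (hzm : ¬ G.Adj z m) : r x z ∧ r z y := by
  rcases eq_or_ne z m with rfl | hne
  · exact ⟨hxm, hmy⟩
  constructor
  · refine (hr.comparable hzx).resolve_left fun h => hzm ?_
    exact hr.adj_of_chain hzy (hr.refl z) (hr.trans _ _ _ h hxm) hmy hne
  · refine (hr.comparable hzy).resolve_right fun h => hzm ?_
    exact (hr.adj_of_chain hzx.symm hxm (hr.trans _ _ _ hmy h) (hr.refl z) hne.symm).symm

theorem not_chain_of_flaps (hr : IsSemiTransitiveOrder G r) {ι : Type*} {t p : ι → V} {d : V}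
    (ht : Pairwise fun i j => G.Adj (t i) (t j)) (hd : ∀ i, G.Adj d (t i))
    (hp : ∀ i j, G.Adj (p i) (t j) ↔ i ≠ j) (hpd : ∀ i, ¬ G.Adj (p i) d)
    {i j k : ι} (hij : i ≠ j) (hjk : j ≠ k) (hik : i ≠ k) :
    ¬ (r (t i) (t j) ∧ r (t j) (t k)) := by
  rintro ⟨hrij, hrjk⟩
  have adj_flap {a b : ι} (h : a ≠ b) : G.Adj (p a) (t b) := (hp a b).2 h
  have not_adj_flap (a : ι) : ¬ G.Adj (p a) (t a) := fun h => (hp a a).1 h rfl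
  obtain ⟨hip, hpk⟩ : r (t i) (p j) ∧ r (p j) (t k) :=
    hr.between_of_not_adj hrij hrjk (adj_flap hij.symm) (adj_flap hjk) (not_adj_flap j)
  obtain ⟨hid, hdk⟩ : r (t i) d ∧ r d (t k) :=
    hr.between_of_not_adj hip hpk (hd i) (hd k) fun h => hpd j h.symm
  rcases hr.comparable (hd j) with hdj | hjd
  · obtain ⟨hip, hpj⟩ : r (t i) (p k) ∧ r (p k) (t j) :=
      hr.between_of_not_adj hid hdj (adj_flap hik.symm) (adj_flap hjk.symm) (hpd k)
    obtain ⟨-, hkj⟩ : r (t i) (t k) ∧ r (t k) (t j) :=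
      hr.between_of_not_adj hip hpj (ht hik.symm) (ht hjk.symm) fun h => not_adj_flap k h.symm
    exact (ht hjk).ne (hr.antisymm _ _ hrjk hkj)
  · obtain ⟨hjp, hpk⟩ : r (t j) (p i) ∧ r (p i) (t k) :=
      hr.between_of_not_adj hjd hdk (adj_flap hij) (adj_flap hik) (hpd i)
    obtain ⟨hji, -⟩ : r (t j) (t i) ∧ r (t i) (t k) :=
      hr.between_of_not_adj hjp hpk (ht hij) (ht hik) fun h => not_adj_flap i h.symm
    exact (ht hij).ne (hr.antisymm _ _ hrij hji)

end IsSemiTransitiveOrder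

theorem graphH_not_word_representable_general [DecidableEq V] {t p : Fin 3 → V} {d : V}
    (ht : Pairwise fun i j => G.Adj (t i) (t j)) (hd : ∀ i, G.Adj d (t i))
    (hp : ∀ i j, G.Adj (p i) (t j) ↔ i ≠ j) (hpd : ∀ i, ¬ G.Adj (p i) d) :
    ¬ WordRepresentable G := by
  intro hG
  obtain ⟨r, hr⟩ := hG.exists_isSemiTransitiveOrder
  have no_chain {i j k : Fin 3} (hrij : r (t i) (t j)) (hrjk : r (t j) (t k))
      (hijk : i ≠ j ∧ j ≠ k ∧ i ≠ k := by decide) : False :=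
    hr.not_chain_of_flaps ht hd hp hpd hijk.1 hijk.2.1 hijk.2.2 ⟨hrij, hrjk⟩
  have total {i j : Fin 3} (hij : i ≠ j) : r (t i) (t j) ∨ r (t j) (t i) := hr.comparable (ht hij)
  rcases total (i := 0) (j := 1) (by decide) with h₀₁ | h₁₀
  · rcases total (i := 1) (j := 2) (by decide) with h₁₂ | h₂₁
    · exact no_chain h₀₁ h₁₂
    · rcases total (i := 0) (j := 2) (by decide) with h₀₂ | h₂₀
      · exact no_chain h₀₂ h₂₁
      · exact no_chain h₂₀ h₀₁
  · rcases total (i := 0) (j := 2) (by decide) with h₀₂ | h₂₀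
    · exact no_chain h₁₀ h₀₂
    · rcases total (i := 1) (j := 2) (by decide) with h₁₂ | h₂₁
      · exact no_chain h₁₂ h₂₀
      · exact no_chain h₂₁ h₁₀

end SemiTransitive

instance : DecidableRel graphH.Adj :=
  inferInstanceAs (DecidableRel (SimpleGraph.fromRel _).Adj)

/-- The graph `H` is not word-representable. -/
theorem graphH_not_word_representable : ¬ WordRepresentable graphH :=
  graphH_not_word_representable_general (t := ![3, 4, 5]) (p := ![1, 2, 0]) (d := 6)
    (by unfold Pairwise; decide) (by decide) (by decide) (by decide)
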